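/- arXiv:2507.12077 — 2 statements merged into one kernel-verified Lean document; each statement's English description precedes it below -/
import Mathlib

section
/- Every finite poset (P,<) admits a partition (B,U) with B containing all deficit elements and U containing all surplus elements, such that e(B,U) ≥ e(P,P)/2. -/
open Finset
open scoped Classical

/-- `e X Y` counts pairs `(x,y)` with `x ∈ X`, `y ∈ Y`, `x < y`. -/
noncomputable def e {P : Type*} [Fintype P] [PartialOrder P] (X Y : Finset P) : ℕ :=
  ((X ×ˢ Y).filter fun p => p.1 < p.2).card

section NetDegree

variable {P : Type*} [PartialOrder P]

/-- The number of elements of `S` above `v` minus the number of elements of `S` below `v`. -/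
noncomputable def netDegree (S : Finset P) (v : P) : ℤ :=
  ∑ u ∈ S, ((if v < u then 1 else 0) - (if u < v then 1 else 0))

theorem netDegree_lt_of_lt {S : Finset P} {u v : P} (hv : v ∈ S) (huv : u < v) :
    netDegree S v < netDegree S u := by
  refine Finset.sum_lt_sum (fun w _ => ?_) ⟨v, hv, ?_⟩
  · have h₁ : v < w → u < w := huv.trans
    have h₂ : w < u → w < v := fun h => h.trans huv
    split_ifs <;> simp_all
  · simp [huv, huv.not_gt]

theorem exists_netDegree_nonneg {S : Finset P} (hS : S.Nonempty) :
    ∃ v ∈ S, 0 ≤ netDegree S v := by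
  obtain ⟨v, hv⟩ := S.exists_minimal hS
  refine ⟨v, hv.prop, Finset.sum_nonneg fun u hu => ?_⟩
  rw [if_neg (hv.not_lt hu)]
  split_ifs <;> simp

/-- The absolute net degrees of a finite poset sum to at least its number of relations. -/
theorem sum_lt_le_sum_abs_netDegree (S : Finset P) :
    ∑ x ∈ S, ∑ y ∈ S, (if x < y then (1 : ℤ) else 0) ≤ ∑ v ∈ S, |netDegree S v| := by
  induction S using Finset.strongInduction with
  | H S ih =>
    rcases S.eq_empty_or_nonempty with rfl | hS
    · simp
    -- Delete an element whose net degree is smallest among the nonnegative ones.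
    obtain ⟨v₀, hv₀, hnonneg₀⟩ := exists_netDegree_nonneg hS
    obtain ⟨v, hv, hmin⟩ := (S.filter fun v => 0 ≤ netDegree S v).exists_min_image (netDegree S)
      ⟨v₀, by simp [hv₀, hnonneg₀]⟩
    obtain ⟨hvS, hnonneg⟩ := Finset.mem_filter.mp hv
    have habs : ∀ u ∈ S.erase v, |netDegree (S.erase v) u| + ((if u < v then 1 else 0) +
        (if v < u then 1 else 0)) = |netDegree S u| := by
      intro u hu
      have huS := Finset.mem_of_mem_erase hu
      have hsplit : netDegree S u = netDegree (S.erase v) u +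
          ((if u < v then 1 else 0) - (if v < u then 1 else 0)) :=
        (Finset.sum_erase_add _ _ hvS).symm
      by_cases huv : u < v
      · have := netDegree_lt_of_lt hvS huv
        simp only [huv, huv.not_gt, if_true, if_false] at hsplit ⊢
        rw [abs_of_nonneg (by omega), abs_of_nonneg (by omega)]
        omega
      by_cases hvu : v < u
      · have hlt := netDegree_lt_of_lt huS hvu
        have hneg : netDegree S u < 0 := by
          by_contra! h
          exact hlt.not_ge (hmin u (by simp [huS, h]))
        simp only [hvu, huv, if_true, if_false] at hsplit ⊢
        rw [abs_of_nonpos (by omega), abs_of_nonpos (by omega)]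
        omega
      · simp [hsplit, huv, hvu]
    have hsum := Finset.sum_congr rfl habs
    rw [Finset.sum_add_distrib, Finset.sum_add_distrib] at hsum
    have hih := ih _ (Finset.erase_ssubset hvS)
    have hrel : ∑ x ∈ S, ∑ y ∈ S, (if x < y then (1 : ℤ) else 0) =
        ∑ x ∈ S.erase v, ∑ y ∈ S.erase v, (if x < y then (1 : ℤ) else 0) +
        (∑ x ∈ S.erase v, (if x < v then 1 else 0) +
          ∑ y ∈ S.erase v, (if v < y then 1 else 0)) := by
      rw [← Finset.sum_erase_add _ _ hvS, ← Finset.sum_erase_add _ _ hvS]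
      simp_rw [← Finset.sum_erase_add _ _ hvS, Finset.sum_add_distrib]
      simp [add_assoc]
    rw [hrel, ← Finset.sum_erase_add _ _ hvS]
    linarith [abs_nonneg (netDegree S v)]

variable [Fintype P]

theorem e_eq_sum (X Y : Finset P) :
    (e X Y : ℤ) = ∑ x ∈ X, ∑ y ∈ Y, (if x < y then 1 else 0) := by
  rw [e, Finset.card_filter, Finset.sum_product]
  push_cast
  rfl

theorem netDegree_univ (v : P) :
    netDegree Finset.univ v = (e {v} Finset.univ : ℤ) - e Finset.univ {v} := by
  simp only [e_eq_sum, netDegree, Finset.sum_sub_distrib, Finset.sum_singleton]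

theorem sum_netDegree_univ (X : Finset P) :
    ∑ v ∈ X, netDegree Finset.univ v = (e X Xᶜ : ℤ) - e Xᶜ X := by
  simp only [e_eq_sum, netDegree, Finset.sum_sub_distrib]
  simp_rw [← Finset.sum_add_sum_compl X, Finset.sum_add_distrib]
  rw [Finset.sum_comm (s := X) (t := X) (f := fun x y => if y < x then (1 : ℤ) else 0),
    Finset.sum_comm (s := X) (t := Xᶜ) (f := fun x y => if y < x then (1 : ℤ) else 0)]
  ring

end NetDegree

/-- Every finite poset has a cut of size at least half the number of relations,
with all deficit elements in `B` and all surplus elements in `U`. -/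
theorem large_cut_structured (P : Type*) [Fintype P] [PartialOrder P] :
    ∃ B U : Finset P, Disjoint B U ∧ B ∪ U = Finset.univ ∧
      (∀ v : P, e (Finset.univ : Finset P) {v} < e {v} (Finset.univ : Finset P) → v ∈ B) ∧
      (∀ v : P, e {v} (Finset.univ : Finset P) < e (Finset.univ : Finset P) {v} → v ∈ U) ∧
      e (Finset.univ : Finset P) Finset.univ ≤ 2 * e B U := by
  obtain ⟨B, hB⟩ : ∃ B : Finset P, ∀ v, v ∈ B ↔ 0 ≤ netDegree Finset.univ v :=
    ⟨Finset.univ.filter fun v => 0 ≤ netDegree Finset.univ v, by simp⟩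
  refine ⟨B, Bᶜ, disjoint_compl_right, Finset.union_compl B, fun v hv => ?_, fun v hv => ?_, ?_⟩
  · rw [hB, netDegree_univ]
    omega
  · rw [Finset.mem_compl, hB, netDegree_univ]
    omega
  · have hle := sum_lt_le_sum_abs_netDegree (Finset.univ : Finset P)
    have hBsum : ∑ v ∈ B, |netDegree Finset.univ v| = (e B Bᶜ : ℤ) - e Bᶜ B := by
      rw [← sum_netDegree_univ]
      exact Finset.sum_congr rfl fun v hv => abs_of_nonneg ((hB v).mp hv)
    have hUsum : ∑ v ∈ Bᶜ, |netDegree Finset.univ v| = -((e Bᶜ B : ℤ) - e B Bᶜ) := by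
      have h := sum_netDegree_univ Bᶜ
      rw [compl_compl] at h
      rw [← h, ← Finset.sum_neg_distrib]
      refine Finset.sum_congr rfl fun v hv => abs_of_neg ?_
      simpa [hB] using hv
    rw [← e_eq_sum, ← Finset.sum_add_sum_compl B, hBsum, hUsum] at hle
    omega
end

section
/- For every finite poset (P,<), the maximum directed cut size satisfies max over partitions (B,U) of e(B,U) ≥ ceil(e(P,P)/2), i.e., 2·maxcut ≥ e(P,P). -/
open Finset
open scoped Classical

section StrictOrderCounting

variable {P : Type*} (R : P → P → Prop)

theorem card_filter_product_eq_sum_left (X Y : Finset P) (Q : P → P → Prop) :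
    ((X ×ˢ Y).filter fun p => Q p.1 p.2).card = ∑ x ∈ X, (Y.filter fun y => Q x y).card := by
  simp only [Finset.card_filter, Finset.sum_product]

theorem card_filter_product_eq_sum_right (X Y : Finset P) (Q : P → P → Prop) :
    ((X ×ˢ Y).filter fun p => Q p.1 p.2).card = ∑ y ∈ Y, (X.filter fun x => Q x y).card := by
  simp only [Finset.card_filter, Finset.sum_product_right]

/-- Passing to a larger element strictly decreases the number of elements above. -/
theorem card_above_lt [IsStrictOrder P R] {U : Finset P} {q z : P} (hz : z ∈ U) (hqz : R q z) :
    (U.filter fun w => R z w).card < (U.filter fun w => R q w).card := by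
  apply Finset.card_lt_card
  refine (Finset.ssubset_iff_of_subset fun w hw => ?_).2 ⟨z, by simp [hz, hqz], by simp [irrefl z]⟩
  simp only [Finset.mem_filter] at hw ⊢
  exact ⟨hw.1, _root_.trans hqz hw.2⟩

/-- If `y` has at least `k` elements of `U` above it, then at least `k` of these have fewer than
`k` elements of `U` above them. -/
theorem le_card_above_of_few_above [IsStrictOrder P R] {U : Finset P} {y : P} {k : ℕ}
    (hk : k ≤ (U.filter fun q => R y q).card) :
    k ≤ (U.filter fun q => R y q ∧ (U.filter fun z => R q z).card < k).card := by
  rcases ((U.filter fun q => R y q ∧ k ≤ (U.filter fun z => R q z).card)).eq_empty_or_nonempty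
    with hempty | hne
  · refine hk.trans (Finset.card_le_card fun q hq => ?_)
    simp only [Finset.mem_filter] at hq ⊢
    refine ⟨hq.1, hq.2, not_le.1 fun hle => ?_⟩
    exact Finset.notMem_empty q (hempty ▸ Finset.mem_filter.2 ⟨hq.1, hq.2, hle⟩)
  · obtain ⟨q, hq, hmin⟩ := Finset.exists_min_image _
      (fun q => (U.filter fun z => R q z).card) hne
    simp only [Finset.mem_filter] at hq hmin
    refine hq.2.2.trans (Finset.card_le_card fun z hz => ?_)
    simp only [Finset.mem_filter] at hz ⊢
    have hyz : R y z := _root_.trans hq.2.1 hz.2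
    refine ⟨hz.1, hyz, not_le.1 fun hle => ?_⟩
    exact (hmin z ⟨hz.1, hyz, hle⟩).not_gt (card_above_lt R hz.1 hz.2)

/-- If every element of `B` has at most as many elements below it as above it, then every element
of `B` has at most as many elements of `B` below it as elements outside `B` above it. -/
theorem card_below_le_card_above_compl [Fintype P] [IsStrictOrder P R] {B U : Finset P}
    (hBU : B ∪ U = Finset.univ)
    (hB : ∀ x ∈ B, (Finset.univ.filter fun w => R w x).card ≤
      (Finset.univ.filter fun w => R x w).card) {y : P} (hy : y ∈ B) :
    (B.filter fun x => R x y).card ≤ (U.filter fun q => R y q).card := by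
  obtain ⟨m, hm, hmin⟩ := Finset.exists_min_image (B.filter fun m => m = y ∨ R y m)
    (fun m => (B.filter fun z => R m z).card) ⟨y, by simp [hy]⟩
  simp only [Finset.mem_filter] at hm hmin
  have up : ∀ z, R m z → R y z := fun z hz =>
    hm.2.elim (fun h => h ▸ hz) fun h => _root_.trans h hz
  have down : ∀ z, R z y → R z m := fun z hz =>
    hm.2.elim (fun h => h ▸ hz) fun h => _root_.trans hz h
  calc (B.filter fun x => R x y).card
      ≤ (Finset.univ.filter fun w => R w m).card := by
        refine Finset.card_le_card fun x hx => ?_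
        simp only [Finset.mem_filter] at hx
        simpa using down x hx.2
    _ ≤ (Finset.univ.filter fun w => R m w).card := hB m hm.1
    _ ≤ (U.filter fun q => R y q).card := by
        refine Finset.card_le_card fun z hz => ?_
        have hmz : R m z := by simpa using hz
        rcases Finset.mem_union.1 (hBU ▸ Finset.mem_univ z) with hzB | hzU
        · exact absurd (card_above_lt R hzB hmz)
            (hmin z ⟨hzB, Or.inr (up z hmz)⟩).not_gt
        · exact Finset.mem_filter.2 ⟨hzU, up z hmz⟩

/-- The relations inside `B` are at most as many as the relations `p < q` across the cut for which
`q` has fewer elements of `U` above it than `p` has elements of `B` below it. -/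
theorem sum_card_below_le_sum_card_across [Fintype P] [IsStrictOrder P R] {B U : Finset P}
    (hBU : B ∪ U = Finset.univ)
    (hB : ∀ x ∈ B, (Finset.univ.filter fun w => R w x).card ≤
      (Finset.univ.filter fun w => R x w).card) :
    ∑ y ∈ B, (B.filter fun x => R x y).card ≤
      ∑ y ∈ B, (U.filter fun q => R y q ∧
        (U.filter fun z => R q z).card < (B.filter fun x => R x y).card).card :=
  Finset.sum_le_sum fun _ hy =>
    le_card_above_of_few_above R (card_below_le_card_above_compl R hBU hB hy)

end StrictOrderCounting

section Cut

variable {P : Type*} [Fintype P] [PartialOrder P]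

/-- If elements of `B` have at most as many elements below as above, and elements of `U` at most as
many above as below, then the cut `(B, U)` has at least as many relations as its two sides. -/
theorem e_self_add_e_self_le {B U : Finset P} (hBU : B ∪ U = Finset.univ)
    (hB : ∀ x ∈ B, (Finset.univ.filter fun w => w < x).card ≤
      (Finset.univ.filter fun w => x < w).card)
    (hU : ∀ x ∈ U, (Finset.univ.filter fun w => x < w).card ≤
      (Finset.univ.filter fun w => w < x).card) :
    e B B + e U U ≤ e B U := by
  have lower : e B B ≤ ((B ×ˢ U).filter fun p => p.1 < p.2 ∧
      (U.filter fun z => p.2 < z).card < (B.filter fun x => x < p.1).card).card := by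
    convert sum_card_below_le_sum_card_across (fun a b : P => a < b) hBU hB using 1
    · exact card_filter_product_eq_sum_right B B fun x y => x < y
    · convert card_filter_product_eq_sum_left B U fun p q => p < q ∧
        (U.filter fun z => q < z).card < (B.filter fun x => x < p).card
  have upper : e U U ≤ ((B ×ˢ U).filter fun p => p.1 < p.2 ∧
      (B.filter fun x => x < p.1).card < (U.filter fun z => p.2 < z).card).card := by
    convert sum_card_below_le_sum_card_across (fun a b : P => b < a)
      ((Finset.union_comm U B).trans hBU) hU using 1
    · exact card_filter_product_eq_sum_left U U fun x y => x < y
    · convert card_filter_product_eq_sum_right B U fun p q => p < q ∧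
        (B.filter fun x => x < p).card < (U.filter fun z => q < z).card
  refine (add_le_add lower upper).trans ?_
  rw [← Finset.card_union_of_disjoint]
  · refine Finset.card_le_card fun p hp => ?_
    simp only [Finset.mem_union, Finset.mem_filter] at hp ⊢
    tauto
  · refine Finset.disjoint_left.2 fun p hp hp' => ?_
    exact (Finset.mem_filter.1 hp).2.2.not_gt (Finset.mem_filter.1 hp').2.2

theorem e_univ_le {B U : Finset P} (hBU : B ∪ U = Finset.univ)
    (hUB : ∀ x ∈ U, ∀ y ∈ B, ¬ x < y) :
    e (Finset.univ : Finset P) Finset.univ ≤ e B B + e U U + e B U := by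
  unfold e
  refine le_trans (Finset.card_le_card fun p hp => ?_)
    ((Finset.card_union_le _ _).trans (Nat.add_le_add_right (Finset.card_union_le _ _) _))
  have hp' : p.1 < p.2 := (Finset.mem_filter.1 hp).2
  have h₁ := Finset.mem_union.1 (hBU ▸ Finset.mem_univ p.1)
  have h₂ := Finset.mem_union.1 (hBU ▸ Finset.mem_univ p.2)
  have h₃ := hUB p.1
  simp only [Finset.mem_union, Finset.mem_filter, Finset.mem_product]
  grind

end Cut

/-- The maximum directed cut of a finite poset has at least half of all relations:
some cut `(B,U)` satisfies `2·e(B,U) ≥ e(P,P)`. -/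
theorem maxcut_half (P : Type*) [Fintype P] [PartialOrder P] :
    ∃ B U : Finset P, Disjoint B U ∧ B ∪ U = Finset.univ ∧
      e (Finset.univ : Finset P) Finset.univ ≤ 2 * e B U := by
  let B : Finset P := Finset.univ.filter fun x =>
    (Finset.univ.filter fun w => w < x).card ≤ (Finset.univ.filter fun w => x < w).card
  have hBU : B ∪ Bᶜ = Finset.univ := Finset.union_compl B
  have hB : ∀ x, x ∈ B ↔ (Finset.univ.filter fun w => w < x).card ≤
      (Finset.univ.filter fun w => x < w).card := fun x => by simp [B]
  refine ⟨B, Bᶜ, disjoint_compl_right, hBU, ?_⟩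
  have inner := e_self_add_e_self_le hBU (fun x hx => (hB x).1 hx) fun x hx =>
    (not_le.1 fun h => Finset.mem_compl.1 hx ((hB x).2 h)).le
  have total := e_univ_le hBU fun x hx y hy hxy => by
    have above := card_above_lt (fun a b : P => a < b) (Finset.mem_univ y) hxy
    have below := card_above_lt (fun a b : P => b < a) (Finset.mem_univ x) hxy
    exact Finset.mem_compl.1 hx ((hB x).2 (below.le.trans (((hB y).1 hy).trans above.le)))
  omega
end
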